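/- arXiv:2301.08879 — 4 statements merged into one kernel-verified Lean document; each statement's English description precedes it below -/
import Mathlib

section
/- For all u, v, x ∈ ℂ with Re(u+v) < 0, the following identity holds: 2·F_{(0,0,2)}(u,v,x) − [ F_{(1/2,0,2)}(u,v,x) + F_{(−1/2,0,2)}(u,v,x) ] = F_{(0,1/2,1)}(u/4, v/4, x/2) + F_{(0,−1/2,1)}(u/4, v/4, x/2). -/
/-!
Put `T n = exp ((u/4) n(n+1)/2 + (v/4) n(n-1)/2 + πi n x)` for `n ∈ ℤ`. The three size-two series
on the left are the sums of `T` over the even integers `2m` and over the odd integers `2m+1` and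
`2m-1`; the two series on the right both equal `∑ (-1)^n T n`, since shifting `x/2` by `±1/2`
multiplies the `n`-th term by `exp (±πi n) = (-1)^n`. Splitting this sum by parity gives the
identity. `T` is a general term of the two-variable Jacobi theta series with
`τ = (u+v)/(8πi)`, so it is summable because `Im τ = -Re (u+v)/(8π) > 0`.
-/

/-- The Ramanujan theta function with characteristics `(α, β, c)`, written with
exponential parameters `a = e^u`, `b = e^v` (so `|ab| < 1` means `Re (u+v) < 0`):
`F_{(α,β,c)}(u,v,x) = ∑_{m∈ℤ} exp(u(m+α)(m+α+1/c)/2 + v(m+α)(m+α−1/c)/2 + 2πi(m+α)(x+β))`. -/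
noncomputable def ramanujanTheta (α β c : ℝ) (u v x : ℂ) : ℂ :=
  ∑' m : ℤ, Complex.exp (u * (((m : ℂ) + α) * ((m : ℂ) + α + 1 / (c : ℂ))) / 2
    + v * (((m : ℂ) + α) * ((m : ℂ) + α - 1 / (c : ℂ))) / 2
    + 2 * Real.pi * Complex.I * ((m : ℂ) + α) * (x + β))

/-- The `n`-th term of `ramanujanTheta 0 0 1 (u/4) (v/4) (x/2)`. -/
noncomputable def quarterTerm (u v x : ℂ) (n : ℤ) : ℂ :=
  Complex.exp (u / 8 * (n * (n + 1)) + v / 8 * (n * (n - 1)) + Real.pi * Complex.I * n * x)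

theorem quarterTerm_summable (u v x : ℂ) (huv : (u + v).re < 0) :
    Summable (quarterTerm u v x) := by
  have hpi : (Real.pi : ℂ) ≠ 0 := Complex.ofReal_ne_zero.2 Real.pi_ne_zero
  have him : 0 < (-Complex.I * (((1 / (8 * Real.pi) : ℝ) : ℂ) * (u + v))).im := by
    have h : (-Complex.I * (((1 / (8 * Real.pi) : ℝ) : ℂ) * (u + v))).im
        = 1 / (8 * Real.pi) * -(u + v).re := by
      rw [neg_mul, Complex.neg_im, Complex.I_mul_im, Complex.re_ofReal_mul]
      ring
    rw [h]
    exact mul_pos (by positivity) (by linarith)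
  refine ((summable_jacobiTheta₂_term_iff
    (-Complex.I * ((u - v) / (16 * Real.pi)) + x / 2) _).2 him).congr fun n => ?_
  unfold jacobiTheta₂_term quarterTerm
  congr 1
  push_cast
  field_simp
  linear_combination -16 * ((n : ℂ) * (u - v) + n ^ 2 * (u + v)) * Complex.I_sq

theorem exp_pi_I_even (m : ℤ) : Complex.exp (Real.pi * Complex.I * (2 * m)) = 1 := by
  rw [← Complex.exp_int_mul_two_pi_mul_I m]
  congr 1
  ring

theorem exp_pi_I_odd (m : ℤ) : Complex.exp (Real.pi * Complex.I * (2 * m + 1)) = -1 := by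
  rw [mul_add, Complex.exp_add, exp_pi_I_even, mul_one, Complex.exp_pi_mul_I, one_mul]

/-- Splitting an absolutely convergent series over `ℤ` by parity. -/
theorem tsum_int_even_add_odd {f : ℤ → ℂ} (hf : Summable f) :
    ∑' n, f n = ∑' m : ℤ, f (2 * m) + ∑' m : ℤ, f (2 * m + 1) := by
  have he : Function.Injective fun m : ℤ => 2 * m := fun a b h => by
    simp only at h; omega
  have ho : Function.Injective fun m : ℤ => 2 * m + 1 := fun a b h => by
    simp only at h; omega
  have hc : IsCompl (Set.range fun m : ℤ => 2 * m) (Set.range fun m : ℤ => 2 * m + 1) :=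
    isCompl_iff.2 ⟨Set.disjoint_left.2 (by rintro _ ⟨a, rfl⟩ ⟨b, h⟩; simp only at h; omega),
      codisjoint_iff.2 (Set.eq_univ_of_forall fun n => by
        obtain ⟨m, h | h⟩ := Int.even_or_odd' n
        exacts [Or.inl ⟨m, h.symm⟩, Or.inr ⟨m, h.symm⟩])⟩
  exact ((he.hasSum_range_iff.2 (hf.comp_injective he).hasSum).add_isCompl hc
    (ho.hasSum_range_iff.2 (hf.comp_injective ho).hasSum)).tsum_eq

/-- A size-one theta series whose `n`-th term is `± T n`, the sign given by parity, is the
difference of the even and odd parts of `∑ T n`. -/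
theorem ramanujanTheta_alternating (u v x : ℂ) (huv : (u + v).re < 0) (β : ℝ)
    (heven : ∀ m : ℤ, Complex.exp (2 * Real.pi * Complex.I * (2 * m) * β) = 1)
    (hodd : ∀ m : ℤ, Complex.exp (2 * Real.pi * Complex.I * (2 * m + 1) * β) = -1) :
    ramanujanTheta 0 β 1 (u/4) (v/4) (x/2)
      = ∑' m : ℤ, quarterTerm u v x (2 * m) - ∑' m : ℤ, quarterTerm u v x (2 * m + 1) := by
  set g : ℤ → ℂ := fun n =>
    quarterTerm u v x n * Complex.exp (2 * Real.pi * Complex.I * n * β) with hg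
  have hF : ramanujanTheta 0 β 1 (u/4) (v/4) (x/2) = ∑' n, g n := by
    unfold ramanujanTheta
    refine tsum_congr fun n => ?_
    simp only [hg, quarterTerm]
    rw [← Complex.exp_add]
    congr 1
    push_cast
    ring
  have hge (m : ℤ) : g (2 * m) = quarterTerm u v x (2 * m) := by
    simp only [hg]; push_cast; rw [heven, mul_one]
  have hgo (m : ℤ) : g (2 * m + 1) = -quarterTerm u v x (2 * m + 1) := by
    simp only [hg]; push_cast; rw [hodd, mul_neg_one]
  have hs : Summable g := by
    refine Summable.of_norm_bounded (quarterTerm_summable u v x huv).norm fun n => ?_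
    obtain ⟨m, rfl | rfl⟩ := Int.even_or_odd' n
    · rw [hge]
    · rw [hgo, norm_neg]
  rw [hF, tsum_int_even_add_odd hs]
  simp only [hge, hgo, tsum_neg, sub_eq_add_neg]

theorem ramanujanTheta_size_two_second (u v x : ℂ) (huv : (u + v).re < 0) :
    2 * ramanujanTheta 0 0 2 u v x
      - (ramanujanTheta (1/2) 0 2 u v x + ramanujanTheta (-(1/2)) 0 2 u v x)
    = ramanujanTheta 0 (1/2) 1 (u/4) (v/4) (x/2)
      + ramanujanTheta 0 (-(1/2)) 1 (u/4) (v/4) (x/2) := by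
  have h0 : ramanujanTheta 0 0 2 u v x = ∑' m : ℤ, quarterTerm u v x (2 * m) := by
    refine tsum_congr fun m => congrArg Complex.exp ?_
    push_cast
    ring
  have h1 : ramanujanTheta (1/2) 0 2 u v x = ∑' m : ℤ, quarterTerm u v x (2 * m + 1) := by
    refine tsum_congr fun m => congrArg Complex.exp ?_
    push_cast
    ring
  have h2 : ramanujanTheta (-(1/2)) 0 2 u v x = ∑' m : ℤ, quarterTerm u v x (2 * m + 1) := by
    -- The characteristic `-1/2` indexes the odd integers as `2m - 1`.
    rw [← (Equiv.subRight (1 : ℤ)).tsum_eq fun m : ℤ => quarterTerm u v x (2 * m + 1)]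
    refine tsum_congr fun m => congrArg Complex.exp ?_
    simp only [Equiv.subRight_apply]
    push_cast
    ring
  have h3 := ramanujanTheta_alternating u v x huv (1/2)
    (fun m => by rw [← exp_pi_I_even m]; congr 1; push_cast; ring)
    (fun m => by rw [← exp_pi_I_odd m]; congr 1; push_cast; ring)
  -- `exp (-πi n) = exp (πi (-n))`, and negation preserves parity.
  have h4 := ramanujanTheta_alternating u v x huv (-(1/2))
    (fun m => by rw [← exp_pi_I_even (-m)]; congr 1; push_cast; ring)
    (fun m => by rw [← exp_pi_I_odd (-m - 1)]; congr 1; push_cast; ring)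
  rw [h0, h1, h2, h3, h4]
  ring
end

section
/- For all u, v, x ∈ ℂ with Re(u+v) < 0, the following identity holds: 2·[ F_{(1/2,0,2)}(u,v,x) + F_{(−1/2,0,2)}(u,v,x) ] = 2·F_{(0,0,1)}(u/4, v/4, x/2) − [ F_{(0,1/2,1)}(u/4, v/4, x/2) + F_{(0,−1/2,1)}(u/4, v/4, x/2) ]. -/
/-- The common summand: the general term of `ramanujanTheta 0 0 1 (u/4) (v/4) (x/2)`. -/
noncomputable def thetaTerm (u v x : ℂ) (n : ℤ) : ℂ :=
  Complex.exp ((u * (n * (n + 1)) + v * (n * (n - 1))) / 8 + Real.pi * Complex.I * n * x)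

lemma summable_thetaTerm (u v x : ℂ) (huv : (u + v).re < 0) : Summable (thetaTerm u v x) := by
  have hpi : (Real.pi : ℂ) ≠ 0 := by exact_mod_cast Real.pi_ne_zero
  have him : 0 < ((u + v) / (8 * Real.pi * Complex.I)).im := by
    have h : (u + v) / (8 * Real.pi * Complex.I)
        = ((1 / (8 * Real.pi) : ℝ) : ℂ) * (-Complex.I * (u + v)) := by
      push_cast
      field_simp
      simp
    rw [h, Complex.im_ofReal_mul]
    refine mul_pos (by positivity) ?_
    have : u.re + v.re < 0 := by simpa using huv
    simp
    linarith
  have := (summable_jacobiTheta₂_term_iff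
    (((u - v) / 8 + Real.pi * Complex.I * x) / (2 * Real.pi * Complex.I))
    ((u + v) / (8 * Real.pi * Complex.I))).mpr him
  refine this.congr fun n => ?_
  rw [jacobiTheta₂_term, thetaTerm]
  congr 1
  field_simp
  ring

/-- The sum over odd integers does not depend on whether they are written `2m + 1` or `2m - 1`. -/
lemma tsum_two_mul_sub_one (f : ℤ → ℂ) : ∑' m : ℤ, f (2 * m - 1) = ∑' m : ℤ, f (2 * m + 1) := by
  rw [← (Equiv.addRight (1 : ℤ)).tsum_eq]
  refine tsum_congr fun m => congrArg f ?_
  simp only [Equiv.coe_addRight]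
  ring

lemma ramanujanTheta_half (u v x : ℂ) :
    ramanujanTheta (1/2) 0 2 u v x = ∑' m : ℤ, thetaTerm u v x (2 * m + 1) := by
  refine tsum_congr fun m => ?_
  rw [thetaTerm]
  congr 1
  push_cast
  ring

lemma ramanujanTheta_neg_half (u v x : ℂ) :
    ramanujanTheta (-(1/2)) 0 2 u v x = ∑' m : ℤ, thetaTerm u v x (2 * m + 1) := by
  rw [← tsum_two_mul_sub_one]
  refine tsum_congr fun m => ?_
  rw [thetaTerm]
  congr 1
  push_cast
  ring

lemma ramanujanTheta_zero_zero (u v x : ℂ) :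
    ramanujanTheta 0 0 1 (u/4) (v/4) (x/2) = ∑' n : ℤ, thetaTerm u v x n := by
  refine tsum_congr fun n => ?_
  rw [thetaTerm]
  congr 1
  push_cast
  ring

lemma ramanujanTheta_zero_half (u v x : ℂ) :
    ramanujanTheta 0 (1/2) 1 (u/4) (v/4) (x/2) = ∑' n : ℤ, (-1) ^ n * thetaTerm u v x n := by
  refine tsum_congr fun n => ?_
  rw [thetaTerm, ← Complex.exp_pi_mul_I, ← Complex.exp_int_mul, ← Complex.exp_add]
  congr 1
  push_cast
  ring

lemma ramanujanTheta_zero_neg_half (u v x : ℂ) :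
    ramanujanTheta 0 (-(1/2)) 1 (u/4) (v/4) (x/2) = ∑' n : ℤ, (-1) ^ n * thetaTerm u v x n := by
  refine tsum_congr fun n => ?_
  have h : (-1 : ℂ) = Complex.exp (-(Real.pi * Complex.I)) := by
    rw [Complex.exp_neg, Complex.exp_pi_mul_I]
    norm_num
  rw [thetaTerm, h, ← Complex.exp_int_mul, ← Complex.exp_add]
  congr 1
  push_cast
  ring

lemma hasSum_int_even_add_odd {f : ℤ → ℂ} {a b : ℂ} (he : HasSum (fun m : ℤ => f (2 * m)) a)
    (ho : HasSum (fun m : ℤ => f (2 * m + 1)) b) : HasSum f (a + b) := by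
  have hie : Function.Injective fun m : ℤ => 2 * m := fun a b h => by simpa using h
  have hio : Function.Injective fun m : ℤ => 2 * m + 1 := fun a b h => by simpa using h
  refine (hie.hasSum_range_iff.mpr he).add_isCompl ?_ (hio.hasSum_range_iff.mpr ho)
  simpa using Int.isCompl_even_odd

/-- Parity splitting: subtracting the alternating sum leaves twice the sum over odd integers. -/
lemma tsum_sub_tsum_alternating (f : ℤ → ℂ) (hf : Summable f) :
    ∑' n : ℤ, f n - ∑' n : ℤ, (-1) ^ n * f n = 2 * ∑' m : ℤ, f (2 * m + 1) := by
  have he : Summable fun m : ℤ => f (2 * m) :=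
    hf.comp_injective (i := fun m : ℤ => 2 * m) fun a b h => by simpa using h
  have ho : Summable fun m : ℤ => f (2 * m + 1) :=
    hf.comp_injective (i := fun m : ℤ => 2 * m + 1) fun a b h => by simpa using h
  have hpe (m : ℤ) : (-1 : ℂ) ^ (2 * m) = 1 := (even_two_mul m).neg_one_zpow
  have hpo (m : ℤ) : (-1 : ℂ) ^ (2 * m + 1) = -1 := (odd_two_mul_add_one m).neg_one_zpow
  have h1 := hasSum_int_even_add_odd he.hasSum ho.hasSum
  have h2 : HasSum (fun n : ℤ => (-1) ^ n * f n) (∑' m : ℤ, f (2 * m) + -∑' m : ℤ, f (2 * m + 1)) :=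
    hasSum_int_even_add_odd (by simpa [hpe] using he.hasSum) (by simpa [hpo] using ho.hasSum.neg)
  rw [h1.tsum_eq, h2.tsum_eq]
  ring

theorem ramanujanTheta_corollary_second (u v x : ℂ) (huv : (u + v).re < 0) :
    2 * (ramanujanTheta (1/2) 0 2 u v x + ramanujanTheta (-(1/2)) 0 2 u v x)
    = 2 * ramanujanTheta 0 0 1 (u/4) (v/4) (x/2)
      - (ramanujanTheta 0 (1/2) 1 (u/4) (v/4) (x/2)
        + ramanujanTheta 0 (-(1/2)) 1 (u/4) (v/4) (x/2)) := by
  rw [ramanujanTheta_half, ramanujanTheta_neg_half, ramanujanTheta_zero_zero,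
    ramanujanTheta_zero_half, ramanujanTheta_zero_neg_half]
  linear_combination -2 * tsum_sub_tsum_alternating _ (summable_thetaTerm u v x huv)
end

section
/- Let q be a real number with 0 < q < 1. Then the generating function for the triangular numbers m(m+1)/2 satisfies 2·Σ_{m∈ℤ} q^{m(m+1)/2} = ∏_{k=0}^{∞} (1 − q^{(k+1)/4}) · [ ∏_{k=0}^{∞} (1 − q^{(2k+3)/8})(1 − q^{(2k−1)/8}) + ∏_{k=0}^{∞} (1 + q^{(2k+3)/8})(1 + q^{(2k−1)/8}) ]. -/
/-!
Write `p = q ^ (1/8)`. Jacobi's triple product identity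
`∏ (1 - x^(2k+2)) * ∏ (1 + z x^(2k+1)) (1 + z⁻¹ x^(2k+1)) = ∑ z^j x^(j^2)`
at `x = p`, `z = ± p^2` turns the two products on the right-hand side into `∑ (±1)^j p^(j^2 + 2j)`.
Adding them kills the odd `j`, and the even `j = 2m` contribute `2 p^(4m^2 + 4m) = 2 q^(m(m+1)/2)`.

The triple product identity (`jacobi_triple`) is obtained from the finite `q`-binomial theorem
(`sum_antidiagonal_euler`): taking `2n` factors, centred at the middle, gives
`∏_{k<n} (1 + z x^(2k+1)) (1 + z⁻¹ x^(2k+1)) = ∑ c_n(j) z^j x^(j^2)` (`finite_triple`), where `c_n(j)`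
is the Gaussian binomial coefficient `[2n, n+j]` in base `x^2`. These coefficients are bounded
uniformly in `n` and `j` and tend to `1 / ∏ (1 - x^(2k+2))`, so dominated convergence applies.
-/

open Filter Topology Finset

/-- The finite `q`-Pochhammer symbol `(y; y)_m = (1 - y) (1 - y^2) ⋯ (1 - y^m)`. -/
def qPoch (y : ℝ) (m : ℕ) : ℝ := ∏ k ∈ range m, (1 - y ^ (k + 1))

lemma qPoch_succ (y : ℝ) (m : ℕ) : qPoch y (m + 1) = qPoch y m * (1 - y ^ (m + 1)) :=
  prod_range_succ _ _

lemma qPoch_pos {y : ℝ} (h0 : 0 < y) (h1 : y < 1) (m : ℕ) : 0 < qPoch y m :=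
  prod_pos fun k _ => sub_pos.2 (pow_lt_one₀ h0.le h1 (by omega))

lemma qPoch_antitone {y : ℝ} (h0 : 0 < y) (h1 : y < 1) : Antitone (qPoch y) := by
  refine antitone_nat_of_succ_le fun m => ?_
  rw [qPoch_succ]
  exact mul_le_of_le_one_right (qPoch_pos h0 h1 m).le (by linarith [pow_pos h0 (m + 1)])

lemma qPoch_tendsto {y : ℝ} (h0 : 0 < y) (h1 : y < 1) :
    Tendsto (qPoch y) atTop (𝓝 (∏' k : ℕ, (1 - y ^ (k + 1)))) := by
  have hs : Summable fun k : ℕ => -y ^ (k + 1) :=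
    ((summable_nat_add_iff 1).2 (summable_geometric_of_lt_one h0.le h1)).neg
  have := (Real.multipliable_one_add_of_summable hs).tendsto_prod_tprod_nat
  simp only [← sub_eq_add_neg] at this
  exact this

lemma qPoch_limit_pos {y : ℝ} (h0 : 0 < y) (h1 : y < 1) : 0 < ∏' k : ℕ, (1 - y ^ (k + 1)) := by
  have hs : Summable fun k : ℕ => ‖-y ^ (k + 1)‖ :=
    ((summable_nat_add_iff 1).2 (summable_geometric_of_lt_one h0.le h1)).neg.norm
  have hne := tprod_one_add_ne_zero_of_summable (f := fun k : ℕ => -y ^ (k + 1)) (fun k => by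
    have := pow_lt_one₀ h0.le h1 (n := k + 1) (by omega)
    linarith) hs
  simp only [← sub_eq_add_neg] at hne
  exact lt_of_le_of_ne
    (ge_of_tendsto' (qPoch_tendsto h0 h1) fun m => (qPoch_pos h0 h1 m).le) hne.symm

/-- The term indexed by `(i, j)` of the `q`-binomial expansion of `∏_{k < i+j} (1 + t y^k)`, divided
by the common factor `(y; y)_{i+j}`. -/
noncomputable def eulerTerm (y t : ℝ) (a : ℕ × ℕ) : ℝ :=
  y ^ (a.1.choose 2) * t ^ a.1 / (qPoch y a.1 * qPoch y a.2)

/-- The `q`-binomial theorem, in a form symmetric in the two indices. The inductive step splits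
`1 - y^(i+j) = (1 - y^j) + y^j (1 - y^i)`. -/
lemma sum_antidiagonal_euler {y : ℝ} (h0 : 0 < y) (h1 : y < 1) (t : ℝ) (N : ℕ) :
    ∏ k ∈ range N, (1 + t * y ^ k) = qPoch y N * ∑ a ∈ antidiagonal N, eulerTerm y t a := by
  induction N with
  | zero => simp [eulerTerm, qPoch]
  | succ N ih =>
    have hP := fun m => (qPoch_pos h0 h1 m).ne'
    have hf : ∀ m : ℕ, 1 - y ^ (m + 1) ≠ 0 := fun m =>
      (sub_pos.2 (pow_lt_one₀ h0.le h1 (by omega))).ne'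
    have key : (1 - y ^ (N + 1)) * ∑ a ∈ antidiagonal (N + 1), eulerTerm y t a
        = (1 + t * y ^ N) * ∑ a ∈ antidiagonal N, eulerTerm y t a := by
      have split : (1 - y ^ (N + 1)) * ∑ a ∈ antidiagonal (N + 1), eulerTerm y t a
          = ∑ a ∈ antidiagonal (N + 1), (1 - y ^ a.2) * eulerTerm y t a
            + ∑ a ∈ antidiagonal (N + 1), y ^ a.2 * (1 - y ^ a.1) * eulerTerm y t a := by
        rw [mul_sum, ← sum_add_distrib]
        refine sum_congr rfl fun a ha => ?_
        rw [← mem_antidiagonal.1 ha, pow_add]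
        ring
      rw [split, Nat.sum_antidiagonal_succ', Nat.sum_antidiagonal_succ, add_mul, one_mul]
      simp only [pow_zero, sub_self, zero_mul, mul_zero, zero_add]
      congr 1
      · refine sum_congr rfl fun a _ => ?_
        have := hP a.1
        have := hP a.2
        have := hf a.2
        simp only [eulerTerm, qPoch_succ]
        field_simp
      · rw [mul_sum]
        refine sum_congr rfl fun a ha => ?_
        have := hP a.1
        have := hP a.2
        have := hf a.1
        rw [← mem_antidiagonal.1 ha]
        simp only [eulerTerm, qPoch_succ, Nat.choose_succ_succ' a.1 1, Nat.choose_one_right]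
        field_simp
        ring
    rw [prod_range_succ, ih, qPoch_succ, mul_assoc _ (1 - _), key]
    ring

/-- The Gaussian binomial coefficient `[2n, n+j]` in base `y`, zero outside `-n ≤ j ≤ n`. -/
noncomputable def centralCoeff (y : ℝ) (n : ℕ) (j : ℤ) : ℝ :=
  if j ∈ Icc (-(n : ℤ)) n then
    qPoch y (2 * n) / (qPoch y (n + j).toNat * qPoch y (n - j).toNat) else 0

lemma prod_reflect {x z : ℝ} (hx : x ≠ 0) (hz : z ≠ 0) (n : ℕ) :
    ∏ k ∈ range n, (1 + z * x ^ (-(2 * (k : ℤ) + 1)))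
      = z ^ n * x ^ (-(n : ℤ) ^ 2) * ∏ k ∈ range n, (1 + z⁻¹ * x ^ (2 * k + 1)) := by
  induction n with
  | zero => simp
  | succ n ih =>
    rw [prod_range_succ, ih, prod_range_succ]
    have e : (-((n + 1 : ℕ) : ℤ) ^ 2) = -(n : ℤ) ^ 2 + -(2 * (n : ℤ) + 1) := by push_cast; ring
    have e2 : x ^ (2 * n + 1) = (x ^ (-(2 * (n : ℤ) + 1)))⁻¹ := by
      rw [zpow_neg, inv_inv]; exact_mod_cast rfl
    have h3 : x ^ (-(2 * (n : ℤ) + 1)) ≠ 0 := zpow_ne_zero _ hx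
    rw [e, zpow_add₀ hx, e2]
    field_simp
    ring

lemma two_mul_choose_two (m : ℕ) : 2 * ((m.choose 2 : ℕ) : ℤ) = (m : ℤ) * (m - 1) := by
  induction m with
  | zero => simp
  | succ m ih =>
    rw [Nat.choose_succ_succ' m 1, Nat.choose_one_right]
    push_cast
    linarith

/-- The finite form of Jacobi's triple product: the `q`-binomial theorem with `N = 2n`, `y = x^2`
and `t = z x^(1-2n)`, so that the exponents of `x` are the odd numbers from `1-2n` to `2n-1`. -/
lemma finite_triple {x z : ℝ} (h0 : 0 < x) (h1 : x < 1) (hz : z ≠ 0) (n : ℕ) :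
    ∏ k ∈ range n, ((1 + z * x ^ (2 * k + 1)) * (1 + z⁻¹ * x ^ (2 * k + 1)))
      = ∑' j : ℤ, centralCoeff (x ^ 2) n j * (z ^ j * x ^ (j ^ 2)) := by
  have hx := h0.ne'
  have hy0 : 0 < x ^ 2 := by positivity
  have hy1 : x ^ 2 < 1 := pow_lt_one₀ h0.le h1 two_ne_zero
  have hc : z ^ n * x ^ (-(n : ℤ) ^ 2) ≠ 0 := mul_ne_zero (pow_ne_zero _ hz) (zpow_ne_zero _ hx)
  have hprod : ∏ k ∈ range (2 * n), (1 + z * x ^ (1 - 2 * (n : ℤ)) * (x ^ 2) ^ k)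
      = z ^ n * x ^ (-(n : ℤ) ^ 2) *
        ∏ k ∈ range n, ((1 + z * x ^ (2 * k + 1)) * (1 + z⁻¹ * x ^ (2 * k + 1))) := by
    have hpow : ∀ k : ℕ, z * x ^ (1 - 2 * (n : ℤ)) * (x ^ 2) ^ k
        = z * x ^ (1 - 2 * (n : ℤ) + 2 * k) := fun k => by
      rw [zpow_add₀ hx, ← pow_mul, mul_assoc]
      norm_cast
    rw [two_mul n, prod_range_add, prod_mul_distrib, mul_comm (∏ k ∈ range n, (1 + z * _)),
      ← mul_assoc, ← prod_reflect hx hz, ← prod_range_reflect]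
    congr 1
    · refine prod_congr rfl fun k hk => ?_
      have := mem_range.1 hk
      rw [hpow]
      congr 3
      omega
    · refine prod_congr rfl fun k _ => ?_
      rw [hpow, ← zpow_natCast]
      congr 3
      push_cast
      ring
  rw [sum_antidiagonal_euler hy0 hy1, mul_sum] at hprod
  rw [tsum_eq_sum (s := Icc (-(n : ℤ)) n) fun j hj => by rw [centralCoeff, if_neg hj, zero_mul]]
  apply mul_left_cancel₀ hc
  rw [← hprod, mul_sum]
  refine sum_nbij' (fun a => (a.1 : ℤ) - n) (fun j => ((n + j).toNat, (n - j).toNat)) ?_ ?_ ?_ ?_ ?_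
  · intro a ha
    have := mem_antidiagonal.1 ha
    simp only [mem_Icc]
    omega
  · intro j hj
    have := mem_Icc.1 hj
    rw [HasAntidiagonal.mem_antidiagonal]
    omega
  · intro a ha
    have := mem_antidiagonal.1 ha
    ext <;> simp only <;> omega
  · intro j hj
    have := mem_Icc.1 hj
    simp only
    omega
  · rintro ⟨i, j⟩ ha
    have hij : i + j = 2 * n := mem_antidiagonal.1 ha
    have hm : (i : ℤ) - n ∈ Icc (-(n : ℤ)) n := by simp only [mem_Icc]; omega
    have e1 : ((n : ℤ) + (i - n)).toNat = i := by omega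
    have e2 : ((n : ℤ) - (i - n)).toNat = j := by omega
    have e3 : (x ^ 2) ^ (i.choose 2) * (z * x ^ (1 - 2 * (n : ℤ))) ^ i
        = z ^ n * x ^ (-(n : ℤ) ^ 2) * (z ^ ((i : ℤ) - n) * x ^ (((i : ℤ) - n) ^ 2)) := by
      have ez : z ^ i = z ^ n * z ^ ((i : ℤ) - n) := by
        rw [← zpow_natCast z n, ← zpow_add₀ hz, ← zpow_natCast]
        congr 1
        ring
      have ex : (x ^ 2) ^ (i.choose 2) * (x ^ (1 - 2 * (n : ℤ))) ^ i
          = x ^ (-(n : ℤ) ^ 2) * x ^ (((i : ℤ) - n) ^ 2) := by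
        rw [← zpow_natCast (x ^ (1 - 2 * (n : ℤ))), ← zpow_mul, ← pow_mul, ← zpow_natCast x,
          ← zpow_add₀ hx, ← zpow_add₀ hx]
        congr 1
        push_cast
        rw [two_mul_choose_two]
        ring
      rw [mul_pow, ez]
      linear_combination z ^ n * z ^ ((i : ℤ) - n) * ex
    simp only [eulerTerm, centralCoeff, if_pos hm, e1, e2, e3]
    ring

/-- Summability of the two-variable theta series, read off from Mathlib's complex version
`jacobiTheta₂` at purely imaginary arguments. -/
lemma summable_theta {x z : ℝ} (h0 : 0 < x) (h1 : x < 1) (hz : z ≠ 0) :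
    Summable fun j : ℤ => z ^ j * x ^ (j ^ 2) := by
  have hlog : Real.log x < 0 := Real.log_neg h0 h1
  let τ : ℂ := ⟨0, -Real.log x / Real.pi⟩
  let w : ℂ := ⟨0, -Real.log |z| / (2 * Real.pi)⟩
  have hτ : 0 < τ.im := div_pos (by linarith) Real.pi_pos
  have hs := ((summable_jacobiTheta₂_term_iff w τ).2 hτ).norm
  refine Summable.of_norm (hs.congr fun j => ?_)
  have ez : ‖z ^ j‖ = Real.exp (j * Real.log |z|) := by
    rw [norm_zpow, Real.norm_eq_abs, ← Real.rpow_intCast,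
      Real.rpow_def_of_pos (abs_pos.2 hz), mul_comm]
  have ex : ‖x ^ (j ^ 2)‖ = Real.exp ((j : ℝ) ^ 2 * Real.log x) := by
    rw [norm_zpow, Real.norm_eq_abs, abs_of_pos h0, ← Real.rpow_intCast,
      Real.rpow_def_of_pos h0, mul_comm]
    push_cast
    rfl
  rw [norm_jacobiTheta₂_term, norm_mul, ez, ex, ← Real.exp_add]
  congr 1
  have := Real.pi_pos.ne'
  simp only [τ, w]
  field_simp
  ring

lemma centralCoeff_tendsto {y : ℝ} (h0 : 0 < y) (h1 : y < 1) (j : ℤ) :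
    Tendsto (fun n => centralCoeff y n j) atTop (𝓝 (∏' k : ℕ, (1 - y ^ (k + 1)))⁻¹) := by
  have hC := (qPoch_limit_pos h0 h1).ne'
  have hP := qPoch_tendsto h0 h1
  have t1 : Tendsto (fun n : ℕ => 2 * n) atTop atTop :=
    tendsto_atTop_mono (fun n => Nat.le_mul_of_pos_left n two_pos) tendsto_id
  have t2 : Tendsto (fun n : ℕ => ((n : ℤ) + j).toNat) atTop atTop :=
    tendsto_atTop_mono (fun n => by omega) (tendsto_sub_atTop_nat j.natAbs)
  have t3 : Tendsto (fun n : ℕ => ((n : ℤ) - j).toNat) atTop atTop :=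
    tendsto_atTop_mono (fun n => by omega) (tendsto_sub_atTop_nat j.natAbs)
  have := (hP.comp t1).div ((hP.comp t2).mul (hP.comp t3)) (mul_ne_zero hC hC)
  rw [div_mul_cancel_left₀ hC] at this
  refine this.congr' ?_
  filter_upwards [eventually_ge_atTop j.natAbs] with n hn
  rw [centralCoeff, if_pos (by simp only [mem_Icc]; omega)]
  rfl

lemma norm_centralCoeff_le {y : ℝ} (h0 : 0 < y) (h1 : y < 1) (n : ℕ) (j : ℤ) :
    ‖centralCoeff y n j‖ ≤ 1 / (∏' k : ℕ, (1 - y ^ (k + 1))) ^ 2 := by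
  have hC := qPoch_limit_pos h0 h1
  have hle := (qPoch_antitone h0 h1).le_of_tendsto (qPoch_tendsto h0 h1)
  have hpos := qPoch_pos h0 h1
  unfold centralCoeff
  split_ifs
  · rw [Real.norm_of_nonneg (div_nonneg (hpos _).le (mul_pos (hpos _) (hpos _)).le), sq]
    refine div_le_div₀ zero_le_one ?_ (mul_pos hC hC)
      (mul_le_mul (hle _) (hle _) hC.le (hpos _).le)
    simpa [qPoch] using qPoch_antitone h0 h1 (Nat.zero_le (2 * n))
  · rw [norm_zero]
    positivity

/-- Jacobi's triple product identity for a real nome. -/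
theorem jacobi_triple {x z : ℝ} (h0 : 0 < x) (h1 : x < 1) (hz : z ≠ 0) :
    (∏' k : ℕ, (1 - (x ^ 2) ^ (k + 1))) *
      ∏' k : ℕ, ((1 + z * x ^ (2 * k + 1)) * (1 + z⁻¹ * x ^ (2 * k + 1)))
      = ∑' j : ℤ, z ^ j * x ^ (j ^ 2) := by
  have hy0 : 0 < x ^ 2 := by positivity
  have hy1 : x ^ 2 < 1 := pow_lt_one₀ h0.le h1 two_ne_zero
  have hC := (qPoch_limit_pos hy0 hy1).ne'
  have hs : Summable fun k : ℕ => x ^ (2 * k + 1) :=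
    (summable_geometric_of_lt_one h0.le h1).comp_injective
      (i := fun k : ℕ => 2 * k + 1) fun a b h => by simp only at h; omega
  have hm : ∀ c : ℝ, Multipliable fun k : ℕ => 1 + c * x ^ (2 * k + 1) := fun c =>
    Real.multipliable_one_add_of_summable (hs.mul_left c)
  have lim1 := ((hm z).mul (hm z⁻¹)).tendsto_prod_tprod_nat
  simp only [finite_triple h0 h1 hz] at lim1
  have lim2 := tendsto_tsum_of_dominated_convergence (𝓕 := atTop)
    (f := fun n (j : ℤ) => centralCoeff (x ^ 2) n j * (z ^ j * x ^ (j ^ 2)))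
    ((summable_theta h0 h1 hz).norm.mul_left (1 / (∏' k : ℕ, (1 - (x ^ 2) ^ (k + 1))) ^ 2))
    (fun j => (centralCoeff_tendsto hy0 hy1 j).mul_const _)
    (Eventually.of_forall fun n j => by
      rw [norm_mul]
      exact mul_le_mul_of_nonneg_right (norm_centralCoeff_le hy0 hy1 n j) (norm_nonneg _))
  rw [tendsto_nhds_unique lim1 lim2, tsum_mul_left, mul_inv_cancel_left₀ hC]

theorem triangular_numbers_generating_function (q : ℝ) (hq0 : 0 < q) (hq1 : q < 1) :
    2 * ∑' m : ℤ, q ^ ((m : ℝ) * ((m : ℝ) + 1) / 2)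
    = (∏' k : ℕ, (1 - q ^ (((k : ℝ) + 1) / 4))) *
      ((∏' k : ℕ, ((1 - q ^ ((2 * (k : ℝ) + 3) / 8)) * (1 - q ^ ((2 * (k : ℝ) - 1) / 8))))
        + ∏' k : ℕ, ((1 + q ^ ((2 * (k : ℝ) + 3) / 8)) * (1 + q ^ ((2 * (k : ℝ) - 1) / 8)))) := by
  obtain ⟨p, hp⟩ : ∃ p : ℝ, p = q ^ (1 / 8 : ℝ) := ⟨_, rfl⟩
  have p0 : 0 < p := hp ▸ Real.rpow_pos_of_pos hq0 _
  have p1 : p < 1 := hp ▸ Real.rpow_lt_one hq0.le hq1 (by norm_num)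
  have hpow : ∀ (e : ℤ) (r : ℝ), r = e / 8 → q ^ r = p ^ e := fun e r h => by
    rw [hp, ← Real.rpow_intCast, ← Real.rpow_mul hq0.le, h]
    congr 1
    ring
  have hp2 : p ^ 2 ≠ 0 := (pow_pos p0 2).ne'
  have a1 : ∀ k : ℕ, q ^ (((k : ℝ) + 1) / 4) = (p ^ 2) ^ (k + 1) := fun k => by
    rw [hpow (2 * (k + 1)) _ (by push_cast; ring), ← pow_mul]
    norm_cast
  have a2 : ∀ k : ℕ, q ^ ((2 * (k : ℝ) + 3) / 8) = p ^ 2 * p ^ (2 * k + 1) := fun k => by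
    rw [hpow (2 * k + 3) _ (by push_cast; ring), ← pow_add]
    norm_cast
    congr 1
    ring
  have a3 : ∀ k : ℕ, q ^ ((2 * (k : ℝ) - 1) / 8) = (p ^ 2)⁻¹ * p ^ (2 * k + 1) := fun k => by
    rw [hpow (2 * k - 1) _ (by push_cast; ring), eq_inv_mul_iff_mul_eq₀ hp2, ← zpow_natCast,
      ← zpow_natCast, ← zpow_add₀ p0.ne']
    congr 1
    push_cast
    ring
  have jp := jacobi_triple p0 p1 hp2
  have jm := jacobi_triple p0 p1 (neg_ne_zero.2 hp2)
  simp only [inv_neg, neg_mul, ← sub_eq_add_neg] at jm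
  simp only [a1, a2, a3]
  rw [mul_add, jp, jm, ← (summable_theta p0 p1 (neg_ne_zero.2 hp2)).tsum_add
    (summable_theta p0 p1 hp2), ← tsum_mul_left]
  -- The terms of odd index cancel, so the sum may be restricted to the range of `m ↦ 2 * m`.
  have hinj : Function.Injective fun m : ℤ => 2 * m := fun a b h => by simp only at h; omega
  rw [← hinj.tsum_eq (f := fun j : ℤ => (-p ^ 2) ^ j * p ^ (j ^ 2) + (p ^ 2) ^ j * p ^ (j ^ 2))]
  · refine tsum_congr fun m => ?_
    rw [(even_two_mul m).neg_zpow, hpow (2 * (2 * m) + (2 * m) ^ 2) _ (by push_cast; ring),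
      zpow_add₀ p0.ne', zpow_mul p 2]
    norm_cast
    ring
  · intro j hj
    rcases Int.even_or_odd' j with ⟨m, rfl | rfl⟩
    · exact ⟨m, rfl⟩
    · refine absurd ?_ hj
      simp only
      rw [(odd_two_mul_add_one m).neg_zpow]
      ring
end

section
/- Let q be a real number with 0 < q < 1. Then the generating function for the (generalized) pentagonal numbers m(3m−1)/2 satisfies 2·Σ_{m∈ℤ} q^{m(3m−1)/2} = ∏_{k=0}^{∞} (1 − q^{3(k+1)/4}) · [ ∏_{k=0}^{∞} (1 − q^{(6k+1)/8})(1 − q^{(6k+5)/8}) + ∏_{k=0}^{∞} (1 + q^{(6k+1)/8})(1 + q^{(6k+5)/8}) ]. -/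
/-!
The two products on the right are the two sides `s = ±1` of the Jacobi triple product with base
`p = q ^ (3/4)` and parameter `a = s * q ^ (1/8)`:
`∏ (1 - p^(k+1)) (1 + a p^k) (1 + (p/a) p^k) = ∑_{j ∈ ℤ} a^j p^(j(j-1)/2)`,
where the `j`-th term equals `s^j q^((3j²-2j)/8)`. Adding the two cases cancels the odd terms and
doubles the even ones, and `j = 2m` gives the exponent `m(3m-1)/2`.

Mathlib has no Jacobi triple product, so it is derived here (`jacobi_triple`) from its finite form
`hasSum_finite_triple`, the `q`-binomial theorem centred on `ℤ`. Setting `1/(p;p)_k = 0` for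
negative `k` (`invPoch`) makes the relation `1/(p;p)_k = (1 - p^(k+1)) / (p;p)_(k+1)` hold on all of
`ℤ`, so adding a factor to either product is a single algebraic identity with no boundary terms.
Passing to the limit uses dominated convergence for series (Tannery's theorem), since
`0 ≤ 1/(p;p)_k ≤ 1/(p;p)_∞`.
-/

open Filter Topology

/-- The finite `q`-Pochhammer symbol `(p;p)_n = ∏_{i=1}^n (1 - p^i)`. -/
noncomputable def poch (p : ℝ) (n : ℕ) : ℝ := ∏ i ∈ Finset.range n, (1 - p ^ (i + 1))

/-- The reciprocal `1/(p;p)_k` for an integer `k`, with the usual convention that it vanishes for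
`k < 0`. -/
noncomputable def invPoch (p : ℝ) (k : ℤ) : ℝ := if k < 0 then 0 else (poch p k.toNat)⁻¹

lemma one_sub_pow_pos {p : ℝ} (h0 : 0 < p) (h1 : p < 1) (n : ℕ) : 0 < 1 - p ^ (n + 1) :=
  sub_pos.mpr (pow_lt_one₀ h0.le h1 (Nat.succ_ne_zero n))

lemma poch_pos {p : ℝ} (h0 : 0 < p) (h1 : p < 1) (n : ℕ) : 0 < poch p n :=
  Finset.prod_pos fun i _ => one_sub_pow_pos h0 h1 i

lemma poch_succ (p : ℝ) (n : ℕ) : poch p (n + 1) = poch p n * (1 - p ^ (n + 1)) := by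
  simp [poch, Finset.prod_range_succ]

/-- At `k = -1` both sides vanish because of the factor `1 - p ^ 0`, so the recurrence needs no
sign restriction. -/
lemma invPoch_eq {p : ℝ} (h0 : 0 < p) (h1 : p < 1) (k : ℤ) :
    invPoch p k = (1 - p ^ (k + 1)) * invPoch p (k + 1) := by
  rcases lt_trichotomy k (-1) with h | rfl | h
  · rw [invPoch, invPoch, if_pos (by omega), if_pos (by omega), mul_zero]
  · simp [invPoch]
  · lift k to ℕ using by omega
    have e : ((k : ℤ) + 1).toNat = k + 1 := by omega
    have hz : p ^ ((k : ℤ) + 1) = p ^ (k + 1) := by exact_mod_cast zpow_natCast p (k + 1)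
    rw [invPoch, invPoch, if_neg (by omega), if_neg (by omega), e, Int.toNat_natCast, poch_succ, hz]
    have := (one_sub_pow_pos h0 h1 k).ne'
    have := (poch_pos h0 h1 k).ne'
    field_simp

/-- Finite Jacobi triple product. The weights `w j` stand for `a ^ j * p ^ (j * (j - 1) / 2)` and
are given through their recurrence. -/
lemma hasSum_finite_triple {p a : ℝ} (h0 : 0 < p) (h1 : p < 1) (ha : a ≠ 0) {w : ℤ → ℝ}
    (w0 : w 0 = 1) (hw : ∀ j, w (j + 1) = a * p ^ j * w j) (m n : ℕ) :
    HasSum (fun j : ℤ => poch p (m + n) * invPoch p (n + j) * invPoch p (m - j) * w j)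
      ((∏ i ∈ Finset.range m, (1 + a * p ^ i)) * ∏ i ∈ Finset.range n, (1 + p / a * p ^ i)) := by
  induction m with
  | zero =>
    induction n with
    | zero =>
      have h := hasSum_single (f := fun j : ℤ => poch p (0 + 0) * invPoch p ((0 : ℕ) + j) *
        invPoch p ((0 : ℕ) - j) * w j) 0 (by
          intro j hj
          rcases lt_or_gt_of_ne hj with h | h
          · simp [invPoch, h]
          · simp [invPoch, h])
      simpa [invPoch, poch, w0] using h
    | succ n ih =>
      have h2 := ((Equiv.addRight (1 : ℤ)).hasSum_iff.mpr ih).mul_left (p / a * p ^ n)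
      convert! ih.add h2 using 1
      · funext j
        simp only [Function.comp, Equiv.coe_addRight]
        have e1 := invPoch_eq h0 h1 (n + j)
        have e2 := invPoch_eq h0 h1 ((0 : ℕ) - (j + 1))
        have a1 : ((n + 1 : ℕ) : ℤ) + j = n + j + 1 := by push_cast; ring
        have a2 : (n : ℤ) + (j + 1) = n + j + 1 := by ring
        have a3 : ((0 : ℕ) : ℤ) - (j + 1) + 1 = (0 : ℕ) - j := by ring
        rw [a3] at e2
        rw [a1, a2, e1, e2, hw, ← add_assoc, poch_succ]
        have z1 : p ^ ((n : ℤ) + j + 1) = p ^ n * p ^ j * p := by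
          rw [zpow_add_one₀ h0.ne', zpow_add₀ h0.ne', zpow_natCast]
        have z2 : p ^ (((0 : ℕ) : ℤ) - j) = (p ^ j)⁻¹ := by simp
        have : p ^ j ≠ 0 := zpow_ne_zero _ h0.ne'
        rw [z1, z2, zero_add, pow_succ]
        field_simp
        ring
      · rw [Finset.prod_range_succ]
        ring
  | succ m ih =>
    have h2 := ((Equiv.subRight (1 : ℤ)).hasSum_iff.mpr ih).mul_left (a * p ^ m)
    convert! ih.add h2 using 1
    · funext j
      simp only [Function.comp, Equiv.subRight_apply]
      have e1 := invPoch_eq h0 h1 (n + (j - 1))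
      have e2 := invPoch_eq h0 h1 (m - j)
      have a1 : (n : ℤ) + (j - 1) + 1 = n + j := by ring
      have a2 : ((m + 1 : ℕ) : ℤ) - j = m - j + 1 := by push_cast; ring
      have a3 : (m : ℤ) - (j - 1) = m - j + 1 := by ring
      have a4 : m + 1 + n = m + n + 1 := by ring
      have e3 := hw (j - 1)
      rw [sub_add_cancel] at e3
      rw [a1] at e1
      rw [a2, a3, a4, e1, e2, e3, poch_succ]
      have z1 : p ^ ((m : ℤ) - j + 1) = p ^ m / p ^ j * p := by
        rw [zpow_add_one₀ h0.ne', zpow_sub₀ h0.ne', zpow_natCast]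
      have z2 : p ^ ((n : ℤ) + j) = p ^ n * p ^ j := by
        rw [zpow_add₀ h0.ne', zpow_natCast]
      have z3 : p ^ (j - 1) = p ^ j / p := by rw [zpow_sub_one₀ h0.ne', div_eq_mul_inv]
      have : p ^ j ≠ 0 := zpow_ne_zero _ h0.ne'
      have := h0.ne'
      rw [z1, z2, z3, pow_succ, pow_add]
      field_simp
      ring
    · rw [Finset.prod_range_succ]
      ring

lemma summable_const_mul_pow {p : ℝ} (h0 : 0 < p) (h1 : p < 1) (c : ℝ) :
    Summable fun i : ℕ => c * p ^ i :=
  (summable_geometric_of_lt_one h0.le h1).mul_left c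

lemma multipliable_one_add_mul_pow {p : ℝ} (h0 : 0 < p) (h1 : p < 1) (c : ℝ) :
    Multipliable fun i : ℕ => 1 + c * p ^ i :=
  Real.multipliable_one_add_of_summable (summable_const_mul_pow h0 h1 c)

lemma tendsto_poch {p : ℝ} (h0 : 0 < p) (h1 : p < 1) :
    Tendsto (poch p) atTop (𝓝 (∏' k : ℕ, (1 - p ^ (k + 1)))) := by
  have h := (multipliable_one_add_mul_pow h0 h1 (-p)).tendsto_prod_tprod_nat
  have e : ∀ i : ℕ, 1 + -p * p ^ i = 1 - p ^ (i + 1) := fun i => by ring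
  simp only [e] at h
  exact h

lemma tprod_poch_ne_zero {p : ℝ} (h0 : 0 < p) (h1 : p < 1) :
    ∏' k : ℕ, (1 - p ^ (k + 1)) ≠ 0 := by
  have e : ∀ i : ℕ, 1 - p ^ (i + 1) = 1 + -p * p ^ i := fun i => by ring
  simp only [e]
  refine tprod_one_add_ne_zero_of_summable (fun i => ?_) (summable_const_mul_pow h0 h1 (-p)).norm
  rw [← e]
  exact (one_sub_pow_pos h0 h1 i).ne'

lemma poch_antitone {p : ℝ} (h0 : 0 < p) (h1 : p < 1) : Antitone (poch p) :=
  antitone_nat_of_succ_le fun n => by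
    rw [poch_succ]
    exact mul_le_of_le_one_right (poch_pos h0 h1 n).le (by have := pow_pos h0 (n + 1); linarith)

lemma tprod_poch_pos {p : ℝ} (h0 : 0 < p) (h1 : p < 1) : 0 < ∏' k : ℕ, (1 - p ^ (k + 1)) :=
  lt_of_le_of_ne (ge_of_tendsto' (tendsto_poch h0 h1) fun n => (poch_pos h0 h1 n).le)
    (tprod_poch_ne_zero h0 h1).symm

lemma invPoch_nonneg {p : ℝ} (h0 : 0 < p) (h1 : p < 1) (k : ℤ) : 0 ≤ invPoch p k := by
  unfold invPoch
  split_ifs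
  · exact le_rfl
  · exact inv_nonneg.mpr (poch_pos h0 h1 _).le

lemma invPoch_le {p : ℝ} (h0 : 0 < p) (h1 : p < 1) (k : ℤ) :
    invPoch p k ≤ (∏' k : ℕ, (1 - p ^ (k + 1)))⁻¹ := by
  have hc := tprod_poch_pos h0 h1
  unfold invPoch
  split_ifs
  · exact inv_nonneg.mpr hc.le
  · exact inv_anti₀ hc ((poch_antitone h0 h1).le_of_tendsto (tendsto_poch h0 h1) _)

lemma tendsto_invPoch {p : ℝ} (h0 : 0 < p) (h1 : p < 1) :
    Tendsto (invPoch p) atTop (𝓝 (∏' k : ℕ, (1 - p ^ (k + 1)))⁻¹) := by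
  have ht : Tendsto Int.toNat atTop atTop :=
    tendsto_atTop.mpr fun b => (eventually_ge_atTop (b : ℤ)).mono fun k hk => by omega
  refine (((tendsto_poch h0 h1).comp ht).inv₀ (tprod_poch_ne_zero h0 h1)).congr' ?_
  filter_upwards [eventually_ge_atTop (0 : ℤ)] with k hk
  simp [invPoch, not_lt.mpr hk]

/-- **Jacobi triple product**, with the theta series given by weights
`w j = a ^ j * p ^ (j * (j - 1) / 2)` through their recurrence. -/
lemma jacobi_triple_s13 {p a : ℝ} (h0 : 0 < p) (h1 : p < 1) (ha : a ≠ 0) {w : ℤ → ℝ}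
    (w0 : w 0 = 1) (hw : ∀ j, w (j + 1) = a * p ^ j * w j) (hs : Summable w) :
    (∏' k : ℕ, (1 - p ^ (k + 1))) * ∏' k : ℕ, ((1 + a * p ^ k) * (1 + p / a * p ^ k)) =
      ∑' j, w j := by
  set c := ∏' k : ℕ, (1 - p ^ (k + 1)) with hcdef
  have hc : 0 < c := tprod_poch_pos h0 h1
  have hP : Tendsto (fun N => (∏ i ∈ Finset.range N, (1 + a * p ^ i)) *
      ∏ i ∈ Finset.range N, (1 + p / a * p ^ i)) atTop
      (𝓝 (∏' k : ℕ, ((1 + a * p ^ k) * (1 + p / a * p ^ k)))) := by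
    simp only [← Finset.prod_mul_distrib]
    exact ((multipliable_one_add_mul_pow h0 h1 a).mul
      (multipliable_one_add_mul_pow h0 h1 (p / a))).tendsto_prod_tprod_nat
  have hS : Tendsto (fun N : ℕ => ∑' j : ℤ,
      poch p (N + N) * invPoch p (N + j) * invPoch p (N - j) * w j) atTop
      (𝓝 (∑' j, c * c⁻¹ * c⁻¹ * w j)) := by
    refine tendsto_tsum_of_dominated_convergence (bound := fun j => 1 * c⁻¹ * c⁻¹ * ‖w j‖)
      (hs.norm.mul_left _) (fun j => ?_) (Eventually.of_forall fun N j => ?_)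
    · have hN : Tendsto (fun N : ℕ => (N : ℤ)) atTop atTop := tendsto_natCast_atTop_atTop
      have t1 : Tendsto (fun N : ℕ => poch p (N + N)) atTop (𝓝 c) :=
        (tendsto_poch h0 h1).comp (tendsto_id.atTop_add_nonneg fun _ => Nat.zero_le _)
      have t2 : Tendsto (fun N : ℕ => invPoch p (N + j)) atTop (𝓝 c⁻¹) :=
        (tendsto_invPoch h0 h1).comp (tendsto_atTop_add_const_right _ j hN)
      have t3 : Tendsto (fun N : ℕ => invPoch p (N - j)) atTop (𝓝 c⁻¹) :=
        (tendsto_invPoch h0 h1).comp (tendsto_atTop_add_const_right _ (-j) hN)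
      exact ((t1.mul t2).mul t3).mul_const _
    · have b1 : poch p (N + N) ≤ 1 := by
        simpa [poch] using poch_antitone h0 h1 (Nat.zero_le (N + N))
      have n1 := invPoch_nonneg h0 h1 (N + j)
      have n2 := invPoch_nonneg h0 h1 (N - j)
      have n3 := (poch_pos h0 h1 (N + N)).le
      rw [norm_mul, Real.norm_of_nonneg (mul_nonneg (mul_nonneg n3 n1) n2)]
      gcongr
      · exact invPoch_le h0 h1 _
      · exact invPoch_le h0 h1 _
  have hF := fun N : ℕ => (hasSum_finite_triple h0 h1 ha w0 hw N N).tsum_eq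
  simp only [hF] at hS
  rw [tendsto_nhds_unique hP hS, tsum_mul_left]
  field_simp

/-- Comparison with `q ^ (|j| / 8)`, since `|j| ≤ 3 j² - 2 j` for integers. -/
lemma summable_theta_s13 {q : ℝ} (hq0 : 0 < q) (hq1 : q < 1) :
    Summable fun j : ℤ => q ^ ((3 * (j : ℝ) ^ 2 - 2 * j) / 8) := by
  have hr0 : 0 < q ^ (1 / 8 : ℝ) := Real.rpow_pos_of_pos hq0 _
  have hr1 : q ^ (1 / 8 : ℝ) < 1 := Real.rpow_lt_one hq0.le hq1 (by norm_num)
  have hg := summable_geometric_of_lt_one hr0.le hr1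
  have hb : Summable fun j : ℤ => (q ^ (1 / 8 : ℝ)) ^ j.natAbs :=
    Summable.of_nat_of_neg (by simpa using hg) (by simpa using hg)
  refine hb.of_nonneg_of_le (fun j => (Real.rpow_pos_of_pos hq0 _).le) fun j => ?_
  rw [← Real.rpow_natCast (q ^ (1 / 8 : ℝ)), ← Real.rpow_mul hq0.le]
  refine Real.rpow_le_rpow_of_exponent_ge hq0 hq1.le ?_
  have h : (j.natAbs : ℤ) ≤ 3 * j ^ 2 - 2 * j := by
    rcases lt_trichotomy j 0 with h | rfl | h
    · have : (j.natAbs : ℤ) = -j := by omega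
      nlinarith
    · simp
    · have : (j.natAbs : ℤ) = j := by omega
      nlinarith
  have h' : (j.natAbs : ℝ) ≤ 3 * (j : ℝ) ^ 2 - 2 * j := by
    have h2 : ((j.natAbs : ℤ) : ℝ) ≤ ((3 * j ^ 2 - 2 * j : ℤ) : ℝ) := Int.cast_le.mpr h
    rw [Int.cast_natCast] at h2
    push_cast at h2 ⊢
    exact h2
  linarith

/-- The triple product at `p = q ^ (3/4)`, `a = s * q ^ (1/8)` with a sign `s`. -/
lemma triple_sign {q : ℝ} (hq0 : 0 < q) (hq1 : q < 1) {s : ℝ} (hs : s * s = 1) :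
    (∏' k : ℕ, (1 - q ^ (3 * ((k : ℝ) + 1) / 4))) *
      (∏' k : ℕ, ((1 + s * q ^ ((6 * (k : ℝ) + 1) / 8)) * (1 + s * q ^ ((6 * (k : ℝ) + 5) / 8)))) =
    ∑' j : ℤ, s ^ j * q ^ ((3 * (j : ℝ) ^ 2 - 2 * j) / 8) := by
  have hs0 : s ≠ 0 := by rintro rfl; simp at hs
  have hp0 : 0 < q ^ (3 / 4 : ℝ) := Real.rpow_pos_of_pos hq0 _
  have hp1 : q ^ (3 / 4 : ℝ) < 1 := Real.rpow_lt_one hq0.le hq1 (by norm_num)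
  have hr0 : 0 < q ^ (1 / 8 : ℝ) := Real.rpow_pos_of_pos hq0 _
  have hsabs : |s| = 1 := by
    rcases mul_self_eq_one_iff.mp hs with rfl | rfl <;> simp
  have h := jacobi_triple_s13 (p := q ^ (3 / 4 : ℝ)) (a := s * q ^ (1 / 8 : ℝ))
    (w := fun j : ℤ => s ^ j * q ^ ((3 * (j : ℝ) ^ 2 - 2 * j) / 8)) hp0 hp1
    (mul_ne_zero hs0 hr0.ne') (by simp)
    (fun j => by
      have e : q ^ ((3 * ((j + 1 : ℤ) : ℝ) ^ 2 - 2 * ((j + 1 : ℤ) : ℝ)) / 8) =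
          q ^ (1 / 8 : ℝ) * (q ^ (3 / 4 : ℝ)) ^ j * q ^ ((3 * (j : ℝ) ^ 2 - 2 * j) / 8) := by
        rw [← Real.rpow_intCast, ← Real.rpow_mul hq0.le, ← Real.rpow_add hq0, ← Real.rpow_add hq0]
        congr 1
        push_cast
        ring
      rw [e, zpow_add_one₀ hs0]
      ring)
    ((summable_theta_s13 hq0 hq1).of_norm_bounded fun j => by
      rw [norm_mul, norm_zpow, Real.norm_eq_abs s, hsabs, one_zpow, one_mul,
        Real.norm_of_nonneg (Real.rpow_pos_of_pos hq0 _).le])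
  rw [← h]
  congr 1
  · congr 1
    funext k
    rw [← Real.rpow_natCast, ← Real.rpow_mul hq0.le]
    congr 2
    push_cast
    ring
  · congr 1
    funext k
    congr 2
    · rw [mul_assoc, ← Real.rpow_natCast, ← Real.rpow_mul hq0.le, ← Real.rpow_add hq0]
      congr 2
      ring
    · -- `s⁻¹ = s` turns `p / a` into `s * q ^ (5/8)`.
      have e : q ^ (3 / 4 : ℝ) / (s * q ^ (1 / 8 : ℝ)) = s * q ^ (5 / 8 : ℝ) := by
        rw [div_eq_iff (mul_ne_zero hs0 hr0.ne'), mul_mul_mul_comm, hs, one_mul,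
          ← Real.rpow_add hq0]
        norm_num
      rw [e, mul_assoc, ← Real.rpow_natCast, ← Real.rpow_mul hq0.le, ← Real.rpow_add hq0]
      congr 2
      ring

theorem pentagonal_numbers_generating_function (q : ℝ) (hq0 : 0 < q) (hq1 : q < 1) :
    2 * ∑' m : ℤ, q ^ ((m : ℝ) * (3 * (m : ℝ) - 1) / 2)
    = (∏' k : ℕ, (1 - q ^ (3 * ((k : ℝ) + 1) / 4))) *
      ((∏' k : ℕ, ((1 - q ^ ((6 * (k : ℝ) + 1) / 8)) * (1 - q ^ ((6 * (k : ℝ) + 5) / 8))))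
        + ∏' k : ℕ, ((1 + q ^ ((6 * (k : ℝ) + 1) / 8)) * (1 + q ^ ((6 * (k : ℝ) + 5) / 8)))) := by
  have h1 := triple_sign hq0 hq1 (s := 1) (by norm_num)
  have h2 := triple_sign hq0 hq1 (s := -1) (by norm_num)
  simp only [one_mul, neg_mul, one_zpow, ← sub_eq_add_neg] at h1 h2
  have hsum := summable_theta_s13 hq0 hq1
  have hsum' : Summable fun j : ℤ => (-1 : ℝ) ^ j * q ^ ((3 * (j : ℝ) ^ 2 - 2 * j) / 8) :=
    hsum.of_norm_bounded fun j => by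
      rw [norm_mul, norm_zpow, norm_neg, norm_one, one_zpow, one_mul,
        Real.norm_of_nonneg (Real.rpow_pos_of_pos hq0 _).le]
  rw [mul_add, h1, h2, ← hsum'.tsum_add hsum, ← tsum_mul_left]
  -- Only even indices contribute, so the sum may be reindexed along `m ↦ 2 * m`.
  have hinj : Function.Injective fun m : ℤ => 2 * m := fun x y h => by simpa using h
  rw [← hinj.tsum_eq (f := fun j : ℤ => (-1 : ℝ) ^ j * q ^ ((3 * (j : ℝ) ^ 2 - 2 * j) / 8) +
    q ^ ((3 * (j : ℝ) ^ 2 - 2 * j) / 8))]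
  · refine tsum_congr fun m => ?_
    have e : (3 * ((2 * m : ℤ) : ℝ) ^ 2 - 2 * ((2 * m : ℤ) : ℝ)) / 8 =
        (m : ℝ) * (3 * m - 1) / 2 := by
      push_cast
      ring
    rw [e, (even_two_mul m).neg_one_zpow]
    ring
  · intro j hj
    rcases Int.even_or_odd j with h | h
    · obtain ⟨m, rfl⟩ := h
      exact ⟨m, two_mul m⟩
    · exact absurd (by simp [h.neg_one_zpow]) hj
end
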